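/- For all (b,c) ∈ ℤ_{≥0}², the specialization of Q_{b,c} at y = 1 and z = 1 satisfies Q_{b,c}(x,1,1,w) = (−1)^c · ∏_{j=0}^{b+c−1}(x − q^{4j}) · ∏_{j=0}^{b+2c−1}(w − q^{2j}) in K[x,w]. -/

import Mathlib

noncomputable section

open MvPolynomial

/-- The field `K = ℚ(q)` of rational functions in `q` over `ℚ`. -/
abbrev K : Type := RatFunc ℚ

/-- The variable `q ∈ K = ℚ(q)`. -/
def q : K := RatFunc.X

/-- The polynomial ring `K[x,y,z,w]`. -/
abbrev P4 : Type := MvPolynomial (Fin 4) K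

def xP : P4 := X 0
def yP : P4 := X 1
def zP : P4 := X 2
def wP : P4 := X 3

/-- The `K`-algebra map `K[x,y,z,w] → K[x,y,z,w]` rescaling the variables:
`x ↦ q^a·x`, `y ↦ q^b·y`, `z ↦ q^c·z`, `w ↦ q^d·w`. -/
def scl (a b c d : ℤ) : P4 →ₐ[K] P4 :=
  aeval ![C (q ^ a) * X 0, C (q ^ b) * X 1, C (q ^ c) * X 2, C (q ^ d) * X 3]

/-- The polynomials `Q_{b,0}(x,y,z,w)`, defined by the recursion (rec1) of the paper. -/
def Qb0 : ℕ → P4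
  | 0 => 1
  | b + 1 =>
      C (q ^ (4 * (b : ℤ))) * wP * yP * (zP - 1) * scl 0 0 (-4) 0 (Qb0 b)
    + C (q ^ (4 * (b : ℤ))) * wP * xP * (yP - 1) * yP * zP * scl 0 (-2) 0 0 (Qb0 b)
    + C (q ^ (6 * (b : ℤ))) * (wP - 1) * (yP - 1) * scl 0 (-2) 0 (-2) (Qb0 b)
    + C (q ^ (4 * (b : ℤ))) * wP * (xP - 1) * yP * (zP - 1) * scl (-4) 2 (-4) 0 (Qb0 b)
    + C (q ^ (6 * (b : ℤ))) * (wP - 1) * (xP - 1) * yP * scl (-4) 0 0 (-2) (Qb0 b)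

/-- The polynomials `Q_{b,c}(x,y,z,w)`: for `c ≥ 1` they are defined by the
recursion (rec2) of the paper, lowering `c`; for `c = 0` by `Qb0`. -/
def Q : ℕ → ℕ → P4
  | b, 0 => Qb0 b
  | b, c + 1 =>
      - (C (q ^ (4 * (b : ℤ) + 8 * (c : ℤ))) * wP ^ 2 * yP * (zP - 1) * zP)
          * scl 0 0 (-4) 0 (Q b c)
    + (C (q ^ (4 * (b : ℤ) + 4 * (c : ℤ) - 2)) * wP * xP * (yP - 1) * zP)
          * (C (q ^ (2 * (b : ℤ) + 4 * (c : ℤ) + 4)) - C (q ^ (2 : ℤ)) * wP * yP * zP)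
          * scl 0 (-2) 0 0 (Q b c)
    - (C (q ^ (6 * (b : ℤ) + 8 * (c : ℤ))) * (wP - 1) * wP * (yP - 1) * zP)
          * scl 0 (-2) 0 (-2) (Q b c)
    + (C (q ^ (4 * (b : ℤ) + 8 * (c : ℤ) - 2)) * wP * (xP - 1) * (zP - 1))
          * (C (q ^ (2 * (b : ℤ) + 4 * (c : ℤ) + 4)) - C (q ^ (2 : ℤ)) * wP * yP * zP)
          * scl (-4) 2 (-4) 0 (Q b c)
    + (C (q ^ (6 * (b : ℤ) + 8 * (c : ℤ) - 2)) * (wP - 1) * (xP - 1))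
          * (C (q ^ (2 * (b : ℤ) + 4 * (c : ℤ) + 4)) - C (q ^ (2 : ℤ)) * wP * yP * zP)
          * scl (-4) 0 0 (-2) (Q b c)

theorem q_ne_zero' : q ≠ 0 := RatFunc.X_ne_zero

/-- Specialization at `y = z = 1`. -/
def spc : P4 →ₐ[K] P4 := aeval ![(X 0 : P4), 1, 1, X 3]

theorem spc_scl (p : P4) : spc (scl (-4) 0 0 (-2) p) = scl (-4) 0 0 (-2) (spc p) := by
  have h : spc.comp (scl (-4) 0 0 (-2)) = (scl (-4) 0 0 (-2)).comp spc := by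
    apply MvPolynomial.algHom_ext
    intro i
    fin_cases i <;> simp [spc, scl, algHom_C, algebraMap_eq]
  exact DFunLike.congr_fun h p

theorem scl_C (a b c d : ℤ) (k : K) : scl a b c d (C k) = C k := by
  simp [scl, algHom_C, algebraMap_eq]

theorem spc_C (k : K) : spc (C k) = C k := by
  simp [spc, algHom_C, algebraMap_eq]

theorem prod_x (n : ℕ) :
    (X 0 - 1) * (C (q ^ (4 * n)) * scl (-4) 0 0 (-2)
      (∏ j ∈ Finset.range n, ((X 0 : P4) - C (q ^ (4 * j))))) =
    ∏ j ∈ Finset.range (n + 1), ((X 0 : P4) - C (q ^ (4 * j))) := by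
  induction n with
  | zero => simp
  | succ n ih =>
    rw [Finset.prod_range_succ _ (n + 1)]
    conv_rhs => rw [← ih]
    rw [Finset.prod_range_succ, map_mul, map_sub, scl_C]
    have h0 : scl (-4) 0 0 (-2) (X 0 : P4) = C (q ^ (-4 : ℤ)) * X 0 := by simp [scl]
    have h1 : (C (q ^ (4 : ℕ)) : P4) * C (q ^ (-4 : ℤ)) = 1 := by
      rw [← C_mul, ← zpow_natCast, ← zpow_add₀ q_ne_zero']; simp
    rw [h0, Nat.mul_succ, pow_add, C_mul]
    linear_combination (X 0 - 1) * C (q ^ (4 * n)) * (scl (-4) 0 0 (-2)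
      (∏ j ∈ Finset.range n, ((X 0 : P4) - C (q ^ (4 * j))))) * X 0 * h1

theorem prod_w (n : ℕ) :
    (X 3 - 1) * (C (q ^ (2 * n)) * scl (-4) 0 0 (-2)
      (∏ j ∈ Finset.range n, ((X 3 : P4) - C (q ^ (2 * j))))) =
    ∏ j ∈ Finset.range (n + 1), ((X 3 : P4) - C (q ^ (2 * j))) := by
  induction n with
  | zero => simp
  | succ n ih =>
    rw [Finset.prod_range_succ _ (n + 1)]
    conv_rhs => rw [← ih]
    rw [Finset.prod_range_succ, map_mul, map_sub, scl_C]
    have h0 : scl (-4) 0 0 (-2) (X 3 : P4) = C (q ^ (-2 : ℤ)) * X 3 := by simp [scl]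
    have h1 : (C (q ^ (2 : ℕ)) : P4) * C (q ^ (-2 : ℤ)) = 1 := by
      rw [← C_mul, ← zpow_natCast, ← zpow_add₀ q_ne_zero']; simp
    rw [h0, Nat.mul_succ, pow_add, C_mul]
    linear_combination (X 3 - 1) * C (q ^ (2 * n)) * (scl (-4) 0 0 (-2)
      (∏ j ∈ Finset.range n, ((X 3 : P4) - C (q ^ (2 * j))))) * X 3 * h1

theorem spc_x : spc xP = X 0 := by simp [spc, xP]
theorem spc_y : spc yP = 1 := by simp [spc, yP]
theorem spc_z : spc zP = 1 := by simp [spc, zP]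
theorem spc_w : spc wP = X 3 := by simp [spc, wP]

theorem spc_Qb0 (b : ℕ) : spc (Qb0 b) =
    (∏ j ∈ Finset.range b, ((X 0 : P4) - C (q ^ (4 * j))))
      * (∏ j ∈ Finset.range b, ((X 3 : P4) - C (q ^ (2 * j)))) := by
  induction b with
  | zero => simp [Qb0]
  | succ b ih =>
    rw [← prod_x, ← prod_w, Qb0]
    simp only [map_add, map_mul, map_sub, map_one, spc_x, spc_y, spc_z, spc_w, spc_C, spc_scl, ih]
    have h : (C (q ^ (6 * (b : ℤ))) : P4) = C (q ^ (4 * b)) * C (q ^ (2 * b)) := by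
      rw [← C_mul, ← pow_add, ← zpow_natCast]; congr 2; push_cast; ring
    rw [h]; ring

theorem spc_Q (b c : ℕ) : spc (Q b c) =
    C ((-1 : K) ^ c) * (∏ j ∈ Finset.range (b + c), ((X 0 : P4) - C (q ^ (4 * j))))
      * (∏ j ∈ Finset.range (b + 2 * c), ((X 3 : P4) - C (q ^ (2 * j)))) := by
  induction c with
  | zero => simp [Q, spc_Qb0]
  | succ c ih =>
    rw [show b + (c + 1) = (b + c) + 1 from rfl, show b + 2 * (c + 1) = (b + 2 * c + 1) + 1 by ring,
      Finset.prod_range_succ _ (b + 2 * c + 1), ← prod_x, ← prod_w, Q]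
    simp only [map_add, map_mul, map_sub, map_neg, map_pow, map_one, spc_x, spc_y, spc_z, spc_w,
      spc_C, spc_scl, ih]
    simp only [← map_pow]
    have h : (C (q ^ (6 * (b : ℤ) + 8 * (c : ℤ) - 2)) : P4) =
        C (q ^ (4 * (b + c))) * C (q ^ (2 * (b + 2 * c))) * C (q ^ (-2 : ℤ)) := by
      rw [← C_mul, ← C_mul, ← pow_add, ← zpow_natCast, ← zpow_add₀ q_ne_zero']
      congr 2; push_cast; ring
    have h2 : (C (q ^ (2 * (b : ℤ) + 4 * (c : ℤ) + 4)) : P4) =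
        C (q ^ (2 * (b + 2 * c + 1))) * C (q ^ (2 : ℤ)) := by
      rw [← C_mul, ← zpow_natCast, ← zpow_add₀ q_ne_zero']
      congr 2; push_cast; ring
    have h1 : (C (q ^ (2 : ℤ)) : P4) * C (q ^ (-2 : ℤ)) = 1 := by
      rw [← C_mul, ← zpow_add₀ q_ne_zero']; simp
    rw [h, h2]
    generalize scl (-4) 0 0 (-2) (∏ j ∈ Finset.range (b + c), ((X 0 : P4) - C (q ^ (4 * j)))) = A
    generalize scl (-4) 0 0 (-2) (∏ j ∈ Finset.range (b + 2 * c), ((X 3 : P4) - C (q ^ (2 * j)))) = B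
    generalize (C (q ^ (2 : ℤ)) : P4) = t at *
    generalize (C (q ^ (-2 : ℤ)) : P4) = u at *
    generalize (C (q ^ (2 * (b + 2 * c + 1))) : P4) = v at *
    generalize (C (q ^ (4 * (b + c))) : P4) = m at *
    generalize (C (q ^ (2 * (b + 2 * c))) : P4) = n at *
    linear_combination m * n * (X 3 - 1) * (X 0 - 1) * (v - X 3) * (-1) ^ c * A * B * h1

/-- `Q_{b,c}(x,1,1,w) = (−1)^c ∏_{j<b+c}(x − q^{4j}) ∏_{j<b+2c}(w − q^{2j})`. -/
theorem Q_spec_y1z1 (b c : ℕ) :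
    aeval ![(X 0 : P4), 1, 1, X 3] (Q b c) =
      C ((-1 : K) ^ c)
        * (∏ j ∈ Finset.range (b + c), ((X 0 : P4) - C (q ^ (4 * j))))
        * (∏ j ∈ Finset.range (b + 2 * c), ((X 3 : P4) - C (q ^ (2 * j)))) := by
  exact spc_Q b c
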